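/- Let a ∈ ℝ^N be a fixed nonzero vector, let P = P(a) be the M×M autocorrelation Toeplitz matrix of a, and let y ∈ ℝ^M be a zero-mean Gaussian random vector with covariance matrix P. Then for every ε ∈ (0,1), P( ‖y‖₂² ≥ M‖a‖₂² (1+ε) ) ≤ exp( − ε² M / (8 ρ(a)) ). -/

import Mathlib

open MeasureTheory Matrix Real Finset

/-- Un-normalized sample autocorrelation `R_a(τ) = ∑_{i=1}^{N-τ} a_i a_{i+τ}`. -/
noncomputable def autocorr (N : ℕ) (a : Fin N → ℝ) (τ : ℕ) : ℝ :=
  ∑ i : Fin N, if h : i.1 + τ < N then a i * a ⟨i.1 + τ, h⟩ else 0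

/-- The `M × M` symmetric Toeplitz covariance matrix `P(a)` with entries `R_a(|i-j|)`. -/
noncomputable def covToeplitz (N M : ℕ) (a : Fin N → ℝ) :
    Matrix (Fin M) (Fin M) ℝ :=
  fun i j => autocorr N a (Nat.dist i.1 j.1)

/-- A product Gaussian integral. -/
lemma lintegral_exp_neg_sum_mul_sq {ι : Type*} [Fintype ι] (b : ι → ℝ) (hb : ∀ i, 0 < b i) :
    ∫⁻ w : ι → ℝ, ENNReal.ofReal (exp (-∑ i, b i * w i ^ 2)) =
      ENNReal.ofReal (∏ i, √(π / b i)) := by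
  have hexp (w : ι → ℝ) : exp (-∑ i, b i * w i ^ 2) = ∏ i, exp (-b i * w i ^ 2) := by
    simp [← exp_sum, ← Finset.sum_neg_distrib]
  simp_rw [hexp]
  rw [← ofReal_integral_eq_lintegral_ofReal]
  · rw [integral_fintype_prod_volume_eq_prod (fun i (x : ℝ) ↦ exp (-b i * x ^ 2))]
    simp_rw [integral_gaussian]
  · exact Integrable.fintype_prod (f := fun i (x : ℝ) ↦ exp (-b i * x ^ 2))
      fun i ↦ integrable_exp_neg_mul_sq (hb i)
  · exact Filter.Eventually.of_forall fun w ↦ Finset.prod_nonneg fun i _ ↦ (exp_pos _).le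

/-- Lebesgue measure is invariant under orthogonal matrices. -/
lemma measurePreserving_toLin'_orthogonal {ι : Type*} [Fintype ι] [DecidableEq ι]
    (U : Matrix ι ι ℝ) (hU : Uᵀ * U = 1) :
    MeasurePreserving (toLin' U) volume volume := by
  have hdet : U.det * U.det = 1 := by simpa using congrArg Matrix.det hU
  refine ⟨(LinearMap.continuous_of_finiteDimensional _).measurable, ?_⟩
  rw [Real.map_matrix_volume_pi_eq_smul_volume_pi (fun h ↦ by simp [h] at hdet)]
  have habs : |U.det⁻¹| = 1 := by
    rcases mul_self_eq_one_iff.1 hdet with h | h <;> simp [h]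
  simp [habs]

lemma dotProduct_conj_diagonal {ι : Type*} [Fintype ι] [DecidableEq ι]
    (U : Matrix ι ι ℝ) (hU : Uᵀ * U = 1) (d w : ι → ℝ) :
    (U *ᵥ w) ⬝ᵥ ((U * diagonal d * Uᵀ) *ᵥ (U *ᵥ w)) = ∑ i, d i * w i ^ 2 := by
  have h : (U * diagonal d * Uᵀ) *ᵥ (U *ᵥ w) = U *ᵥ (diagonal d *ᵥ w) := by
    simp only [mulVec_mulVec, Matrix.mul_assoc, hU, Matrix.mul_one]
  rw [h, dotProduct_mulVec, ← mulVec_transpose, mulVec_mulVec, hU, one_mulVec]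
  simp only [dotProduct, mulVec_diagonal]
  exact Finset.sum_congr rfl fun i _ ↦ by ring

/-- The unnormalized moment generating function of `∑ i, v i ^ 2` under the centred Gaussian density
with covariance matrix `A`. -/
lemma lintegral_exp_neg_half_quadratic_sub {ι : Type*} [Fintype ι] [DecidableEq ι]
    {A : Matrix ι ι ℝ} (hA : A.IsHermitian) (hpos : ∀ i, 0 < hA.eigenvalues i) (t : ℝ)
    (ht : ∀ i, 2 * t * hA.eigenvalues i < 1) :
    ∫⁻ v : ι → ℝ, ENNReal.ofReal (exp (-((1 / 2) * (v ⬝ᵥ A⁻¹ *ᵥ v) - t * ∑ i, v i ^ 2))) =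
      ENNReal.ofReal (∏ i, √(2 * π * hA.eigenvalues i / (1 - 2 * t * hA.eigenvalues i))) := by
  set U : Matrix ι ι ℝ := hA.eigenvectorUnitary.1
  have hU : Uᵀ * U = 1 := by
    have := Unitary.coe_star_mul_self hA.eigenvectorUnitary
    rwa [star_eq_conjTranspose, conjTranspose_eq_transpose_of_trivial] at this
  have hU' : U * Uᵀ = 1 := mul_eq_one_comm.1 hU
  have hspec : A = U * diagonal hA.eigenvalues * Uᵀ := by
    have := hA.spectral_theorem
    rw [Unitary.conjStarAlgAut_apply, star_eq_conjTranspose,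
      conjTranspose_eq_transpose_of_trivial] at this
    exact this
  have hinv : A⁻¹ = U * diagonal (fun i ↦ (hA.eigenvalues i)⁻¹) * Uᵀ := by
    apply inv_eq_right_inv
    conv_lhs => enter [1]; rw [hspec]
    calc _ = U * (diagonal hA.eigenvalues * ((Uᵀ * U) *
          diagonal (fun i ↦ (hA.eigenvalues i)⁻¹))) * Uᵀ := by simp only [Matrix.mul_assoc]
      _ = 1 := by
        have : (fun i ↦ hA.eigenvalues i * (hA.eigenvalues i)⁻¹) = fun _ ↦ (1 : ℝ) :=
          funext fun i ↦ mul_inv_cancel₀ (hpos i).ne'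
        rw [hU, Matrix.one_mul, diagonal_mul_diagonal, this, diagonal_one, Matrix.mul_one, hU']
  have hnorm (w : ι → ℝ) : ∑ i, (U *ᵥ w) i ^ 2 = ∑ i, w i ^ 2 := by
    have := dotProduct_conj_diagonal U hU (fun _ ↦ 1) w
    rw [diagonal_one, Matrix.mul_one, hU', one_mulVec] at this
    simpa [dotProduct, sq] using this
  rw [← (measurePreserving_toLin'_orthogonal U hU).lintegral_comp
    (by simp only [dotProduct, mulVec]; fun_prop)]
  have hquad (w : ι → ℝ) :
      (1 / 2) * (toLin' U w ⬝ᵥ A⁻¹ *ᵥ toLin' U w) - t * ∑ i, toLin' U w i ^ 2 =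
        ∑ i, ((hA.eigenvalues i)⁻¹ / 2 - t) * w i ^ 2 := by
    simp only [toLin'_apply]
    rw [hinv, dotProduct_conj_diagonal U hU, hnorm, Finset.mul_sum, Finset.mul_sum,
      ← Finset.sum_sub_distrib]
    exact Finset.sum_congr rfl fun i _ ↦ by ring
  have hcoef (i : ι) : (hA.eigenvalues i)⁻¹ / 2 - t =
      (1 - 2 * t * hA.eigenvalues i) / (2 * hA.eigenvalues i) := by
    have := (hpos i).ne'
    field_simp
  simp_rw [hquad]
  rw [lintegral_exp_neg_sum_mul_sq]
  · congr 1
    refine Finset.prod_congr rfl fun i _ ↦ ?_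
    rw [hcoef, div_div_eq_mul_div]
    ring_nf
  · intro i
    rw [hcoef]
    have := ht i
    have := hpos i
    exact div_pos (by linarith) (by linarith)

lemma inv_one_sub_le_exp {u : ℝ} (h0 : 0 ≤ u) (h1 : u ≤ 1 / 2) :
    (1 - u)⁻¹ ≤ exp (u + u ^ 2) := by
  have h : 1 + (u + u ^ 2) + (u + u ^ 2) ^ 2 / 2 ≤ exp (u + u ^ 2) :=
    quadratic_le_exp_of_nonneg (by positivity)
  refine le_trans ?_ h
  rw [inv_le_iff_one_le_mul₀ (by linarith)]
  nlinarith [mul_nonneg (sq_nonneg u) (sub_nonneg.2 h1), mul_nonneg h0 (sq_nonneg u),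
    mul_nonneg (mul_nonneg (sq_nonneg u) (sub_nonneg.2 h1)) h0,
    mul_nonneg (mul_nonneg (sq_nonneg u) (sub_nonneg.2 h1)) (sq_nonneg u)]

/-- Chernoff bound for the squared norm of a centred Gaussian vector with nondegenerate covariance
matrix `A` whose eigenvalues are at most `L`. -/
lemma gaussian_sum_sq_upper_tail {ι : Type*} [Fintype ι] [DecidableEq ι]
    {A : Matrix ι ι ℝ} (hA : A.IsHermitian) (hpos : ∀ i, 0 < hA.eigenvalues i) {L : ℝ}
    (hL0 : 0 < L) (hL : ∀ i, hA.eigenvalues i ≤ L) {ε : ℝ} (hε : ε ∈ Set.Ioo (0 : ℝ) 1) :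
    volume.withDensity (fun v : ι → ℝ ↦ ENNReal.ofReal
      ((√((2 * π) ^ Fintype.card ι * A.det))⁻¹ * exp (-(1 / 2) * (v ⬝ᵥ A⁻¹ *ᵥ v))))
        {v | ∑ k, v k ^ 2 ≥ A.trace * (1 + ε)} ≤
      ENNReal.ofReal (exp (-(ε ^ 2 * A.trace / (8 * L)))) := by
  obtain ⟨hε0, hε1⟩ := hε
  set c := (√((2 * π) ^ Fintype.card ι * A.det))⁻¹ with hc
  set K := A.trace * (1 + ε) with hK
  set t := ε / (4 * L) with ht
  have ht0 : 0 < t := by positivity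
  have htL : 2 * t * L = ε / 2 := by rw [ht]; field_simp; norm_num
  have hu (i : ι) : 2 * t * hA.eigenvalues i ≤ 1 / 2 := by
    have := mul_le_mul_of_nonneg_left (hL i) (by positivity : 0 ≤ 2 * t)
    linarith
  have hu0 (i : ι) : 0 < 2 * t * hA.eigenvalues i := mul_pos (by positivity) (hpos i)
  have htr : A.trace = ∑ i, hA.eigenvalues i := by simpa using hA.trace_eq_sum_eigenvalues
  have hdet : A.det = ∏ i, hA.eigenvalues i := by simpa using hA.det_eq_prod_eigenvalues
  have hmeas : MeasurableSet {v : ι → ℝ | ∑ k, v k ^ 2 ≥ K} :=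
    measurableSet_le measurable_const (by fun_prop)
  have hprod : c * ∏ i, √(2 * π * hA.eigenvalues i / (1 - 2 * t * hA.eigenvalues i)) =
      ∏ i, √((1 - 2 * t * hA.eigenvalues i)⁻¹) := by
    have h2 : (2 * π) ^ Fintype.card ι * A.det = ∏ i, (2 * π * hA.eigenvalues i) := by
      rw [Finset.prod_mul_distrib, hdet]; simp
    have h3 : √(∏ i, (2 * π * hA.eigenvalues i)) = ∏ i, √(2 * π * hA.eigenvalues i) :=
      Real.sqrt_prod _ fun i _ ↦ by have := hpos i; positivity
    rw [hc, h2, h3, ← Finset.prod_inv_distrib, ← Finset.prod_mul_distrib]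
    refine Finset.prod_congr rfl fun i _ ↦ ?_
    have hi : 0 < 2 * π * hA.eigenvalues i := by have := hpos i; positivity
    rw [div_eq_mul_inv, Real.sqrt_mul hi.le, inv_mul_cancel_left₀ (Real.sqrt_pos.2 hi).ne']
  have hbound : ∏ i, √((1 - 2 * t * hA.eigenvalues i)⁻¹) ≤
      exp (t * A.trace + 2 * t ^ 2 * L * A.trace) := by
    calc _ ≤ ∏ i, exp (t * hA.eigenvalues i + 2 * t ^ 2 * L * hA.eigenvalues i) := by
          refine Finset.prod_le_prod (fun i _ ↦ Real.sqrt_nonneg _) fun i _ ↦ ?_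
          refine Real.sqrt_le_iff.2 ⟨(exp_pos _).le, ?_⟩
          refine (inv_one_sub_le_exp (hu0 i).le (hu i)).trans ?_
          rw [← Real.exp_nat_mul, exp_le_exp]
          have := mul_le_mul_of_nonneg_left (hL i)
            (mul_nonneg (by positivity : 0 ≤ 4 * t ^ 2) (hpos i).le)
          push_cast
          linarith
      _ = _ := by
          rw [← Real.exp_sum, Finset.sum_add_distrib, ← Finset.mul_sum, ← Finset.mul_sum, htr]
  have hc0 : 0 ≤ c := by positivity
  rw [withDensity_apply _ hmeas]
  calc _ ≤ ∫⁻ v in {v : ι → ℝ | ∑ k, v k ^ 2 ≥ K}, ENNReal.ofReal (c * exp (-(t * K))) *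
        ENNReal.ofReal (exp (-((1 / 2) * (v ⬝ᵥ A⁻¹ *ᵥ v) - t * ∑ i, v i ^ 2))) := by
        refine setLIntegral_mono' hmeas fun v hv ↦ ?_
        rw [← ENNReal.ofReal_mul (by positivity), mul_assoc, ← Real.exp_add]
        refine ENNReal.ofReal_le_ofReal (mul_le_mul_of_nonneg_left (exp_le_exp.2 ?_) hc0)
        have := mul_le_mul_of_nonneg_left (show K ≤ ∑ k, v k ^ 2 from hv) ht0.le
        linarith
    _ ≤ ∫⁻ v : ι → ℝ, ENNReal.ofReal (c * exp (-(t * K))) *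
        ENNReal.ofReal (exp (-((1 / 2) * (v ⬝ᵥ A⁻¹ *ᵥ v) - t * ∑ i, v i ^ 2))) :=
        setLIntegral_le_lintegral _ _
    _ = ENNReal.ofReal (exp (-(t * K)) * ∏ i, √((1 - 2 * t * hA.eigenvalues i)⁻¹)) := by
        rw [lintegral_const_mul' _ _ ENNReal.ofReal_ne_top,
          lintegral_exp_neg_half_quadratic_sub hA hpos t fun i ↦ by linarith [hu i],
          ← ENNReal.ofReal_mul (by positivity), ← hprod]
        ring_nf
    _ ≤ _ := by
        refine ENNReal.ofReal_le_ofReal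
          ((mul_le_mul_of_nonneg_left hbound (exp_pos _).le).trans ?_)
        rw [← Real.exp_add, exp_le_exp]
        apply le_of_eq
        rw [hK, ht]
        field_simp
        ring

/-- The convolution matrix of `a`, whose Gram matrix is `covToeplitz N M a`. -/
def convMatrix (N M : ℕ) (a : Fin N → ℝ) : Matrix (Fin (N + M)) (Fin M) ℝ :=
  of fun n i => if h : i.1 ≤ n.1 ∧ n.1 - i.1 < N then a ⟨n.1 - i.1, h.2⟩ else 0

lemma convMatrix_apply_of_not {N M : ℕ} (a : Fin N → ℝ) {n : Fin (N + M)} {i : Fin M}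
    (h : ¬ (i.1 ≤ n.1 ∧ n.1 - i.1 < N)) : convMatrix N M a n i = 0 :=
  dif_neg h

lemma convMatrix_apply_of_eq {N M : ℕ} (a : Fin N → ℝ) {n : Fin (N + M)} {i : Fin M} {k : ℕ}
    (hk : k < N) (h : n.1 = k + i.1) : convMatrix N M a n i = a ⟨k, hk⟩ := by
  obtain rfl : k = n.1 - i.1 := by omega
  exact dif_pos ⟨by omega, hk⟩

lemma sum_convMatrix_mul_of_le (N M : ℕ) (a : Fin N → ℝ) {i j : Fin M} (hij : i ≤ j) :
    ∑ n, convMatrix N M a n i * convMatrix N M a n j = autocorr N a (j.1 - i.1) := by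
  have hij' : i.1 ≤ j.1 := hij
  let e : Fin N ↪ Fin (N + M) :=
    ⟨fun k ↦ ⟨k.1 + j.1, by omega⟩, fun k l h ↦ by
      simp only [Fin.mk.injEq] at h; exact Fin.ext (by omega)⟩
  rw [← Finset.sum_subset (Finset.subset_univ (Finset.univ.map e)), Finset.sum_map, autocorr]
  · refine Finset.sum_congr rfl fun k _ ↦ ?_
    have hj : convMatrix N M a (e k) j = a k := convMatrix_apply_of_eq a k.2 rfl
    have he : (e k).1 = k.1 + j.1 := rfl
    split_ifs with h
    · rw [hj, convMatrix_apply_of_eq a h (by omega), mul_comm]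
    · rw [convMatrix_apply_of_not a (by omega), zero_mul]
  · intro n _ hn
    rw [convMatrix_apply_of_not a (i := j), mul_zero]
    refine fun h ↦ hn (Finset.mem_map.2 ⟨⟨n.1 - j.1, h.2⟩, Finset.mem_univ _, Fin.ext ?_⟩)
    exact Nat.sub_add_cancel h.1

lemma covToeplitz_eq_gram (N M : ℕ) (a : Fin N → ℝ) :
    covToeplitz N M a = (convMatrix N M a)ᴴ * convMatrix N M a := by
  ext i j
  simp only [covToeplitz, mul_apply, conjTranspose_apply, star_trivial]
  rcases le_total i j with h | h
  · rw [sum_convMatrix_mul_of_le N M a h, Nat.dist_eq_sub_of_le h]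
  · rw [Finset.sum_congr rfl fun n _ ↦ mul_comm (convMatrix N M a n i) (convMatrix N M a n j),
      sum_convMatrix_mul_of_le N M a h, Nat.dist_eq_sub_of_le_right h]

lemma trace_covToeplitz (N M : ℕ) (a : Fin N → ℝ) :
    (covToeplitz N M a).trace = M * ∑ i, a i ^ 2 := by
  simp [Matrix.trace, covToeplitz, autocorr, sq]

theorem gaussian_toeplitz_upper_tail (N M : ℕ) (hN : 1 ≤ N) (hM : 1 ≤ M)
    (a : Fin N → ℝ) (ha : a ≠ 0)
    (hP : (covToeplitz N M a).IsHermitian)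
    (ν : Measure (Fin M → ℝ))
    (hν : ν = volume.withDensity (fun v => ENNReal.ofReal
      ((Real.sqrt ((2 * π) ^ M * (covToeplitz N M a).det))⁻¹ *
        Real.exp (-(1 / 2) * (v ⬝ᵥ (covToeplitz N M a)⁻¹ *ᵥ v))))) :
    ∀ ε ∈ Set.Ioo (0 : ℝ) 1,
      ν {v | ∑ k, (v k) ^ 2 ≥ M * (∑ i, (a i) ^ 2) * (1 + ε)} ≤
        ENNReal.ofReal (Real.exp (-(ε ^ 2 * M) /
          (8 * ((⨆ i, hP.eigenvalues i) / ∑ i, (a i) ^ 2)))) := by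
  rintro ε hε
  subst hν
  have hpsd : (covToeplitz N M a).PosSemidef := by
    rw [covToeplitz_eq_gram]
    exact posSemidef_conjTranspose_mul_self _
  by_cases hdet : (covToeplitz N M a).det = 0
  · simp [hdet]
  have hpos : ∀ i, 0 < hP.eigenvalues i :=
    (hpsd.posDef_iff_det_ne_zero.2 hdet).eigenvalues_pos
  have hL (i : Fin M) : hP.eigenvalues i ≤ ⨆ i, hP.eigenvalues i :=
    le_ciSup (Set.finite_range _).bddAbove i
  have key := gaussian_sum_sq_upper_tail hP hpos ((hpos ⟨0, hM⟩).trans_le (hL _)) hL hε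
  rw [trace_covToeplitz, Fintype.card_fin] at key
  convert key using 3
  rw [mul_div_assoc', div_div_eq_mul_div]
  ring
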